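/- Under Assumptions 1 and 3, the rare-event exponent admits the variational representations I_P(B) = inf_{(m,w)∈B×ℝ} J_P(m,w) = inf_{(m,w)∈B×ℝ} {w + J_Q(m,w)}. -/

import Mathlib

open MeasureTheory Filter Set Topology
open scoped ENNReal NNReal

/-- A sequence of measures satisfies the large deviation principle with rate function `I`:
upper bound over closed sets and lower bound over open sets, at exponential speed `n`. -/
def SatisfiesLDP {X : Type*} [TopologicalSpace X] [MeasurableSpace X]
    (mu : ℕ → Measure X) (I : X → ℝ≥0∞) : Prop :=
  (∀ F : Set X, IsClosed F →
      limsup (fun n : ℕ => (((n : ℝ)⁻¹ : ℝ) : EReal) * ENNReal.log (mu n F)) atTop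
        ≤ -(⨅ x ∈ F, (I x : EReal))) ∧
  (∀ G : Set X, IsOpen G →
      -(⨅ x ∈ G, (I x : EReal)) ≤
        liminf (fun n : ℕ => (((n : ℝ)⁻¹ : ℝ) : EReal) * ENNReal.log (mu n G)) atTop)

/-- A good rate function: lower semicontinuous with compact sublevel sets. -/
def IsGoodRate {X : Type*} [TopologicalSpace X] (I : X → ℝ≥0∞) : Prop :=
  LowerSemicontinuous I ∧ ∀ c : ℝ≥0∞, c ≠ ⊤ → IsCompact {x | I x ≤ c}

/-- The subdifferential of an extended-real-valued function on ℝ at a point. -/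
def Subdiff (f : ℝ → EReal) (x : ℝ) : Set ℝ :=
  {k | ∀ y : ℝ, f x + ((k * (y - x) : ℝ) : EReal) ≤ f y}

/-- `(1/n) log x` as an extended real number. -/
noncomputable def expRate (n : ℕ) (x : ℝ≥0∞) : EReal :=
  (((n : ℝ)⁻¹ : ℝ) : EReal) * ENNReal.log x

/-- The action `W_n = -(1/n) log (dP/dQ)`. -/
noncomputable def action {Λ : Type*} [MeasurableSpace Λ]
    (P Q : Measure Λ) (n : ℕ) (x : Λ) : ℝ :=
  -(n : ℝ)⁻¹ * Real.log ((P.rnDeriv Q) x).toReal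

/-!
Two large deviation principles can be compared locally: if `μ n G ≤ exp (n c) * ν n F` for `G` open
and `F` closed, then `inf_F J ≤ inf_G I + c`, and shrinking `F` to a point turns this into a
pointwise inequality, by lower semicontinuity and regularity of the space.

With `c = 0` and the projection `(m, w) ↦ m` this gives `I_P m ≤ J_P (m, w)`, and
`inf_{B × ℝ} J_P ≤ I_P m` for `m` in the interior of `B`; since the infima of `I_P` over the
interior and the closure of `B` agree, the first representation follows.

For the second, the density `dQ_n/dP_n = exp (n W_n)` is a function of the pair `(M_n, W_n)`, so the
law of the pair under `Q_n` is its law under `P_n` tilted by `exp (n w)`. Near `(m, w)` this density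
lies between `exp (n (w - ε))` and `exp (n (w + ε))`, hence `w + J_Q (m, w) = J_P (m, w)`.
-/

lemma coe_ennreal_iInf {ι : Sort*} (f : ι → ℝ≥0∞) :
    ((⨅ i, f i : ℝ≥0∞) : EReal) = ⨅ i, (f i : EReal) :=
  EReal.coe_ennreal_strictMono.monotone.map_iInf_of_continuousAt
    continuous_coe_ennreal_ereal.continuousAt EReal.coe_ennreal_top

lemma exists_isClosed_mem_nhds_subset_le_iInf {X β : Type*} [TopologicalSpace X] [RegularSpace X]
    [CompleteLattice β] {f : X → β} {x : X} (hf : LowerSemicontinuousAt f x) {r : β}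
    (hr : r < f x) {U : Set X} (hU : U ∈ 𝓝 x) :
    ∃ F ∈ 𝓝 x, IsClosed F ∧ F ⊆ U ∧ r ≤ ⨅ y ∈ F, f y := by
  obtain ⟨F, hFx, hF, hFU⟩ := exists_mem_nhds_isClosed_subset (inter_mem hU (hf r hr))
  exact ⟨F, hFx, hF, fun y hy => (hFU hy).1, le_iInf₂ fun y hy => (hFU hy).2.le⟩

lemma expRate_mono (n : ℕ) : Monotone (expRate n) := fun _ _ hxy =>
  mul_le_mul_of_nonneg_left (ENNReal.log_monotone hxy)
    (EReal.coe_nonneg.2 (inv_nonneg.2 n.cast_nonneg))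

lemma expRate_exp_mul {n : ℕ} (hn : n ≠ 0) (c : ℝ) (x : ℝ≥0∞) :
    expRate n (ENNReal.ofReal (Real.exp (n * c)) * x) = c + expRate n x := by
  have hinv : (0 : EReal) ≤ ((n : ℝ)⁻¹ : ℝ) := EReal.coe_nonneg.2 (inv_nonneg.2 n.cast_nonneg)
  rw [expRate, ENNReal.log_mul_add, ENNReal.log_ofReal_of_pos (Real.exp_pos _), Real.log_exp,
    EReal.left_distrib_of_nonneg_of_ne_top hinv (EReal.coe_ne_top _), ← EReal.coe_mul,
    inv_mul_cancel_left₀ (Nat.cast_ne_zero.2 hn), expRate]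

section Density

variable {α : Type*} [MeasurableSpace α] {μ : Measure α}

lemma restrict_withDensity_le_smul {f : α → ℝ≥0∞} {c : ℝ≥0∞} {s : Set α} (hs : MeasurableSet s)
    (hf : ∀ x ∈ s, f x ≤ c) : (μ.withDensity f).restrict s ≤ c • μ :=
  calc (μ.withDensity f).restrict s = (μ.restrict s).withDensity f := restrict_withDensity hs f
    _ ≤ (μ.restrict s).withDensity fun _ => c :=
      withDensity_mono ((ae_restrict_mem hs).mono hf)
    _ = (c • μ).restrict s := by rw [withDensity_const, Measure.restrict_smul]
    _ ≤ c • μ := Measure.restrict_le_self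

lemma withDensity_exp_withDensity_exp_neg {f : α → ℝ} (hf : Measurable f) :
    (μ.withDensity fun x => ENNReal.ofReal (Real.exp (f x))).withDensity
      (fun x => ENNReal.ofReal (Real.exp (-f x))) = μ := by
  simp_rw [Real.exp_neg, ENNReal.ofReal_inv_of_pos (Real.exp_pos _)]
  exact withDensity_inv_same (by fun_prop)
    (ae_of_all _ fun x => (ENNReal.ofReal_pos.2 (Real.exp_pos _)).ne')
    (ae_of_all _ fun x => ENNReal.ofReal_ne_top)

lemma map_withDensity_comp {β : Type*} [MeasurableSpace β] {g : α → β} (hg : Measurable g)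
    {f : β → ℝ≥0∞} (hf : Measurable f) :
    (μ.withDensity (f ∘ g)).map g = (μ.map g).withDensity f := by
  ext s hs
  rw [Measure.map_apply hg hs, withDensity_apply _ (hg hs), withDensity_apply _ hs,
    setLIntegral_map hs hf hg]
  rfl

end Density

section Action

variable {Λ : Type*} [MeasurableSpace Λ]

lemma measurable_action (P Q : Measure Λ) (n : ℕ) : Measurable (action P Q n) :=
  (Measure.measurable_rnDeriv P Q).ennreal_toReal.log.const_mul _

variable {P Q : Measure Λ} [SigmaFinite P] [P.HaveLebesgueDecomposition Q]

lemma rnDeriv_ae_eq_exp_action (hPQ : P ≪ Q) (hQP : Q ≪ P) {n : ℕ} (hn : n ≠ 0) :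
    P.rnDeriv Q =ᵐ[Q] fun x => ENNReal.ofReal (Real.exp (-(n * action P Q n x))) := by
  filter_upwards [P.rnDeriv_lt_top Q, hQP.ae_le (Measure.rnDeriv_pos hPQ)] with x hx_top hx_pos
  have hlog : -(n * action P Q n x) = Real.log (P.rnDeriv Q x).toReal := by
    rw [action]; field_simp
  rw [hlog, Real.exp_log (ENNReal.toReal_pos hx_pos.ne' hx_top.ne),
    ENNReal.ofReal_toReal hx_top.ne]

lemma withDensity_exp_action (hPQ : P ≪ Q) (hQP : Q ≪ P) {n : ℕ} (hn : n ≠ 0) :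
    P.withDensity (fun x => ENNReal.ofReal (Real.exp (n * action P Q n x))) = Q := by
  have hP : Q.withDensity (fun x => ENNReal.ofReal (Real.exp (-(n * action P Q n x)))) = P := by
    rw [← withDensity_congr_ae (rnDeriv_ae_eq_exp_action hPQ hQP hn),
      Measure.withDensity_rnDeriv_eq P Q hPQ]
  have hinv := withDensity_exp_withDensity_exp_neg (μ := Q)
    ((measurable_action P Q n).const_mul (n : ℝ)).neg
  simpa only [Pi.neg_apply, hP, neg_neg] using hinv

lemma map_prodMk_action_eq_withDensity {X : Type*} [MeasurableSpace X] {M : Λ → X}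
    (hM : Measurable M) (hPQ : P ≪ Q) (hQP : Q ≪ P) {n : ℕ} (hn : n ≠ 0) :
    Q.map (fun x => (M x, action P Q n x)) =
      (P.map fun x => (M x, action P Q n x)).withDensity
        fun p => ENNReal.ofReal (Real.exp (n * p.2)) := by
  rw [← map_withDensity_comp (hM.prodMk (measurable_action P Q n)) (by fun_prop)]
  exact congrArg _ (withDensity_exp_action hPQ hQP hn).symm

end Action

namespace SatisfiesLDP

variable {X : Type*} [TopologicalSpace X] [MeasurableSpace X] {μ : ℕ → Measure X} {I : X → ℝ≥0∞}

section Contraction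

variable {Y : Type*} [TopologicalSpace Y] [MeasurableSpace Y] {ν : ℕ → Measure Y} {J : Y → ℝ≥0∞}

lemma iInf_le_iInf_add (hμ : SatisfiesLDP μ I) (hν : SatisfiesLDP ν J) {G : Set X} {F : Set Y}
    (hG : IsOpen G) (hF : IsClosed F) {c : ℝ}
    (hle : ∀ᶠ n : ℕ in atTop, μ n G ≤ ENNReal.ofReal (Real.exp (n * c)) * ν n F) :
    (⨅ y ∈ F, (J y : EReal)) ≤ (⨅ x ∈ G, (I x : EReal)) + c := by
  have hexp : (fun n => expRate n (μ n G)) ≤ᶠ[atTop]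
      (fun _ => (c : EReal)) + fun n => expRate n (ν n F) := by
    filter_upwards [hle, eventually_ne_atTop 0] with n hn hn0
    exact (expRate_mono n hn).trans_eq (expRate_exp_mul hn0 c _)
  have hneg : -(⨅ x ∈ G, (I x : EReal)) ≤ c - ⨅ y ∈ F, (J y : EReal) :=
    calc -(⨅ x ∈ G, (I x : EReal)) ≤ liminf (fun n => expRate n (μ n G)) atTop := hμ.2 G hG
      _ ≤ limsup (fun n => expRate n (μ n G)) atTop := liminf_le_limsup
      _ ≤ limsup ((fun _ => (c : EReal)) + fun n => expRate n (ν n F)) atTop :=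
        limsup_le_limsup hexp
      _ ≤ limsup (fun _ : ℕ => (c : EReal)) atTop + limsup (fun n => expRate n (ν n F)) atTop :=
        EReal.limsup_add_le (by simp) (by simp)
      _ ≤ c - ⨅ y ∈ F, (J y : EReal) := by
        rw [limsup_const]
        exact add_le_add_right (hν.1 F hF) _
  rw [EReal.neg_le, EReal.neg_sub (by simp) (by simp), add_comm, ← sub_eq_add_neg] at hneg
  exact (EReal.sub_le_iff_le_add (by simp) (by simp)).1 hneg

-- `s` ranges over all sets because closed sets need not be measurable: the product `σ`-algebra on
-- a product space can be smaller than its Borel `σ`-algebra.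
lemma rate_apply_le_add [RegularSpace Y] (hμ : SatisfiesLDP μ I) (hν : SatisfiesLDP ν J)
    {f : X → Y} (hf : Continuous f) {x : X} (hJ : LowerSemicontinuousAt J (f x)) {U : Set Y}
    (hU : U ∈ 𝓝 (f x)) {c : ℝ} (hle : ∀ᶠ n : ℕ in atTop, ∀ s ⊆ U,
      μ n (f ⁻¹' s) ≤ ENNReal.ofReal (Real.exp (n * c)) * ν n s) :
    (J (f x) : EReal) ≤ I x + c := by
  have hJ' : LowerSemicontinuousAt (fun y => (J y : EReal)) (f x) :=
    continuous_coe_ennreal_ereal.continuousAt.comp_lowerSemicontinuousAt hJ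
      EReal.coe_ennreal_strictMono.monotone
  refine le_of_forall_lt_imp_le_of_dense fun r hr => ?_
  obtain ⟨F, hFx, hF, hFU, hrF⟩ := exists_isClosed_mem_nhds_subset_le_iInf hJ' hr hU
  have hle_interior : ∀ᶠ n : ℕ in atTop,
      μ n (f ⁻¹' interior F) ≤ ENNReal.ofReal (Real.exp (n * c)) * ν n F := by
    filter_upwards [hle] with n hn
    exact (measure_mono (preimage_mono interior_subset)).trans (hn F hFU)
  have hx : x ∈ f ⁻¹' interior F := mem_interior_iff_mem_nhds.2 hFx
  calc r ≤ ⨅ y ∈ F, (J y : EReal) := hrF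
    _ ≤ (⨅ x ∈ f ⁻¹' interior F, (I x : EReal)) + c :=
      hμ.iInf_le_iInf_add hν (isOpen_interior.preimage hf) hF hle_interior
    _ ≤ I x + c := by gcongr; exact iInf₂_le x hx

lemma rate_apply_le_of_map [RegularSpace Y] (hμ : SatisfiesLDP μ I) {f : X → Y}
    (hf : Continuous f) (hfm : Measurable f) (hν : SatisfiesLDP (fun n => (μ n).map f) J) {x : X}
    (hJ : LowerSemicontinuousAt J (f x)) : J (f x) ≤ I x := by
  have hle := hμ.rate_apply_le_add hν hf hJ univ_mem (c := 0) <|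
    Eventually.of_forall fun n s _ => by simpa using Measure.le_map_apply hfm.aemeasurable s
  simpa using hle

lemma iInf_preimage_le_of_map [RegularSpace Y] [OpensMeasurableSpace Y] (hμ : SatisfiesLDP μ I)
    {f : X → Y} (hf : Continuous f) (hfm : Measurable f)
    (hν : SatisfiesLDP (fun n => (μ n).map f) J) {B : Set Y} {y : Y} (hy : y ∈ interior B) :
    (⨅ x ∈ f ⁻¹' B, (I x : EReal)) ≤ J y := by
  obtain ⟨F, hFy, hF, hFB⟩ := exists_mem_nhds_isClosed_subset (mem_interior_iff_mem_nhds.1 hy)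
  have hle := hν.iInf_le_iInf_add hμ (isOpen_interior (s := F)) (hF.preimage hf) (c := 0) <|
    Eventually.of_forall fun n => by
      rw [Measure.map_apply hfm isOpen_interior.measurableSet]
      simpa using measure_mono (preimage_mono interior_subset)
  calc (⨅ x ∈ f ⁻¹' B, (I x : EReal)) ≤ ⨅ x ∈ f ⁻¹' F, (I x : EReal) :=
        biInf_mono (preimage_mono hFB)
    _ ≤ ⨅ y ∈ interior F, (J y : EReal) := by simpa using hle
    _ ≤ J y := iInf₂_le y (mem_interior_iff_mem_nhds.2 hFy)

lemma iInf_closure_eq_iInf_preimage_of_map [RegularSpace Y] [OpensMeasurableSpace Y]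
    (hμ : SatisfiesLDP μ I) {f : X → Y} (hf : Continuous f) (hfm : Measurable f)
    (hν : SatisfiesLDP (fun n => (μ n).map f) J) (hJ : LowerSemicontinuous J) {B : Set Y}
    (hB : (⨅ y ∈ interior B, J y) = ⨅ y ∈ closure B, J y) :
    ((⨅ y ∈ closure B, J y : ℝ≥0∞) : EReal) = ⨅ x ∈ f ⁻¹' B, (I x : EReal) := by
  apply le_antisymm
  · refine le_iInf₂ fun x hx => EReal.coe_ennreal_le_coe_ennreal_iff.2 ?_
    exact (iInf₂_le (f x) (subset_closure hx)).trans (hμ.rate_apply_le_of_map hf hfm hν (hJ _))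
  · simp only [← hB, coe_ennreal_iInf]
    exact le_iInf₂ fun y hy => hμ.iInf_preimage_le_of_map hf hfm hν hy

end Contraction

section ExponentialTilting

variable [RegularSpace X] {ν : ℕ → Measure X} {J : X → ℝ≥0∞} {φ : X → ℝ} {x : X}

lemma rate_le_add_of_withDensity_exp (hμ : SatisfiesLDP μ I) (hν : SatisfiesLDP ν J)
    (hφ : Measurable φ) (hφx : UpperSemicontinuousAt φ x) (hI : LowerSemicontinuousAt I x)
    (hdens : ∀ᶠ n : ℕ in atTop,
      ν n = (μ n).withDensity fun y => ENNReal.ofReal (Real.exp (n * φ y))) :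
    (I x : EReal) ≤ J x + φ x := by
  have hlt : ∀ c : ℝ, φ x < c → (I x : EReal) ≤ J x + c := fun c hc => by
    refine hν.rate_apply_le_add hμ continuous_id hI (hφx c hc) ?_
    filter_upwards [hdens] with n hn s hs
    have hrestrict : (ν n).restrict (φ ⁻¹' Iio c) ≤ ENNReal.ofReal (Real.exp (n * c)) • μ n := by
      rw [hn]
      refine restrict_withDensity_le_smul (hφ measurableSet_Iio) fun y hy => ?_
      gcongr
      exact (mem_Iio.1 hy).le
    calc ν n s = (ν n).restrict (φ ⁻¹' Iio c) s := (Measure.restrict_eq_self _ hs).symm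
      _ ≤ ENNReal.ofReal (Real.exp (n * c)) * μ n s := hrestrict s
  rw [add_comm, ← EReal.sub_le_iff_le_add (by simp) (by simp), ← EReal.le_of_forall_lt_iff_le]
  intro c hc
  rw [EReal.sub_le_iff_le_add (by simp) (by simp), add_comm]
  exact hlt c (EReal.coe_lt_coe_iff.1 hc)

lemma rate_add_eq_of_withDensity_exp (hμ : SatisfiesLDP μ I) (hν : SatisfiesLDP ν J)
    (hφ : Measurable φ) (hφx : ContinuousAt φ x) (hI : LowerSemicontinuousAt I x)
    (hJ : LowerSemicontinuousAt J x)
    (hdens : ∀ᶠ n : ℕ in atTop,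
      ν n = (μ n).withDensity fun y => ENNReal.ofReal (Real.exp (n * φ y))) :
    φ x + (J x : EReal) = I x := by
  have hdens' : ∀ᶠ n : ℕ in atTop,
      μ n = (ν n).withDensity fun y => ENNReal.ofReal (Real.exp (n * (-φ) y)) := by
    filter_upwards [hdens] with n hn
    simpa only [hn, Pi.neg_apply, mul_neg] using
      (withDensity_exp_withDensity_exp_neg (hφ.const_mul (n : ℝ))).symm
  have hIJ := hμ.rate_le_add_of_withDensity_exp hν hφ hφx.upperSemicontinuousAt hI hdens
  have hJI := hν.rate_le_add_of_withDensity_exp hμ hφ.neg hφx.neg.upperSemicontinuousAt hJ hdens'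
  rw [Pi.neg_apply, EReal.coe_neg, ← sub_eq_add_neg] at hJI
  refine le_antisymm ?_ (hIJ.trans_eq (add_comm _ _))
  exact (add_comm _ _).trans_le (EReal.add_le_of_le_sub hJI)

end ExponentialTilting

end SatisfiesLDP

theorem rare_event_variational_representation_general
    {X : Type*} [TopologicalSpace X] [RegularSpace X] [MeasurableSpace X] [OpensMeasurableSpace X]
    {Λ : ℕ → Type*} [∀ n, MeasurableSpace (Λ n)] {P Q : ∀ n, Measure (Λ n)}
    [∀ n, SigmaFinite (P n)] [∀ n, (P n).HaveLebesgueDecomposition (Q n)]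
    (habs : ∀ n, P n ≪ Q n ∧ Q n ≪ P n) {M : ∀ n, Λ n → X} (hM : ∀ n, Measurable (M n))
    {B : Set X} {I_P : X → ℝ≥0∞} (hLDP_M : SatisfiesLDP (fun n => (P n).map (M n)) I_P)
    (hI_P : LowerSemicontinuous I_P)
    (hB : (⨅ m ∈ interior B, I_P m) = ⨅ m ∈ closure B, I_P m)
    {J_P J_Q : X × ℝ → ℝ≥0∞}
    (hLDP_P : SatisfiesLDP (fun n => (P n).map fun x => (M n x, action (P n) (Q n) n x)) J_P)
    (hLDP_Q : SatisfiesLDP (fun n => (Q n).map fun x => (M n x, action (P n) (Q n) n x)) J_Q)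
    (hJ_P : LowerSemicontinuous J_P) (hJ_Q : LowerSemicontinuous J_Q) :
    ((⨅ m ∈ closure B, I_P m : ℝ≥0∞) : EReal) = (⨅ m ∈ B, ⨅ w : ℝ, (J_P (m, w) : EReal)) ∧
      ((⨅ m ∈ closure B, I_P m : ℝ≥0∞) : EReal) =
        ⨅ m ∈ B, ⨅ w : ℝ, ((w : EReal) + (J_Q (m, w) : EReal)) := by
  have hfst : SatisfiesLDP
      (fun n => ((P n).map fun x => (M n x, action (P n) (Q n) n x)).map Prod.fst) I_P := by
    simpa only [Measure.map_map measurable_fst ((hM _).prodMk (measurable_action _ _ _)),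
      Function.comp_def] using hLDP_M
  have hcontract : ((⨅ m ∈ closure B, I_P m : ℝ≥0∞) : EReal) =
      ⨅ m ∈ B, ⨅ w : ℝ, (J_P (m, w) : EReal) := by
    rw [hLDP_P.iInf_closure_eq_iInf_preimage_of_map continuous_fst measurable_fst hfst hI_P hB,
      ← prod_univ, biInf_prod]
    simp only [mem_univ, iInf_true]
  have htilt (m : X) (w : ℝ) : (w : EReal) + J_Q (m, w) = J_P (m, w) :=
    hLDP_P.rate_add_eq_of_withDensity_exp hLDP_Q measurable_snd continuousAt_snd (hJ_P _) (hJ_Q _)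
      ((eventually_ne_atTop 0).mono fun n hn =>
        map_prodMk_action_eq_withDensity (hM n) (habs n).1 (habs n).2 hn)
  simpa only [htilt, and_self] using hcontract

/-- Under Assumptions 1 and 3, the rare-event exponent admits the variational representations
`I_P(B) = inf_(m ∈ B, w) J_P(m,w) = inf_(m ∈ B, w) (w + J_Q(m,w))`. -/
theorem rare_event_variational_representation
    {D : ℕ} {Λ : ℕ → Type*} [∀ n, MeasurableSpace (Λ n)]
    (P Q : ∀ n, Measure (Λ n))
    [∀ n, IsProbabilityMeasure (P n)] [∀ n, IsProbabilityMeasure (Q n)]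
    (habs : ∀ n, P n ≪ Q n ∧ Q n ≪ P n)
    (M : ∀ n, Λ n → (Fin D → ℝ)) (hM : ∀ n, Measurable (M n))
    (B : Set (Fin D → ℝ)) (hB : MeasurableSet B)
    (I_P : (Fin D → ℝ) → ℝ≥0∞)
    (hLDP_M : SatisfiesLDP (fun n => (P n).map (M n)) I_P)
    (hIPgood : IsGoodRate I_P)
    (hIPB : (⨅ m ∈ interior B, I_P m) = ⨅ m ∈ closure B, I_P m)
    (hIPBfin : (⨅ m ∈ closure B, I_P m) ≠ ⊤)
    (J_P J_Q : (Fin D → ℝ) × ℝ → ℝ≥0∞)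
    (hLDP_P : SatisfiesLDP (fun n => (P n).map (fun x => (M n x, action (P n) (Q n) n x))) J_P)
    (hLDP_Q : SatisfiesLDP (fun n => (Q n).map (fun x => (M n x, action (P n) (Q n) n x))) J_Q)
    (hJPgood : IsGoodRate J_P) (hJQgood : IsGoodRate J_Q)
    (hdom : {p | J_P p ≠ ⊤} = {p | J_Q p ≠ ⊤})
    (hne : {p | J_P p ≠ ⊤}.Nonempty)
    :
    ((⨅ m ∈ closure B, I_P m : ℝ≥0∞) : EReal)
        = (⨅ m ∈ B, ⨅ w : ℝ, (J_P (m, w) : EReal)) ∧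
    ((⨅ m ∈ closure B, I_P m : ℝ≥0∞) : EReal)
        = ⨅ m ∈ B, ⨅ w : ℝ, ((w : EReal) + (J_Q (m, w) : EReal)) := by
  exact rare_event_variational_representation_general habs hM hLDP_M hIPgood.1 hIPB hLDP_P hLDP_Q
    hJPgood.1 hJQgood.1
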